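/- Let q > 2, λ > 0, and let f : [0,∞) → ℝ be a twice continuously differentiable solution of the ODE f''(ξ) + λ|f'(ξ)|^q − (1/2)ξ f'(ξ) + ((q−2)/(2(q−1))) f(ξ) = 0 on [0,∞) with f(0) = −1 and f'(0) = 0, and define g(t) = e^{−t/(q−1)} f'(e^t). Then liminf_{t→∞} g(t) ≥ C₀, where C₀ = (1/(λq))^{1/(q−1)}. -/

import Mathlib

open Set Filter Topology Real

/-- `f` is a twice continuously differentiable solution, on the set `s`, of the
self-similar profile ODE `f'' + λ|f'|^q - (1/2)ξ f' + ((q-2)/(2(q-1))) f = 0`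
associated with the generalized deterministic KPZ equation. -/
def SolvesKPZProfile (q lam : ℝ) (s : Set ℝ) (f : ℝ → ℝ) : Prop :=
  ContDiffOn ℝ 2 f s ∧
  ∀ ξ ∈ s,
    derivWithin (derivWithin f s) s ξ + lam * |derivWithin f s ξ| ^ q
      - (1 / 2) * ξ * derivWithin f s ξ + ((q - 2) / (2 * (q - 1))) * f ξ = 0

/-- The function `g(t) = e^{-t/(q-1)} f'(e^t)`, i.e. the profile derivative in the
variables `f'(ξ) = ξ^{1/(q-1)} g(t)`, `ξ = e^t`. -/
noncomputable def kpzG (q : ℝ) (f : ℝ → ℝ) : ℝ → ℝ :=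
  fun t => Real.exp (-t / (q - 1)) * derivWithin f (Set.Ici 0) (Real.exp t)

/-!
The slope `h = f'` satisfies the differentiated equation `h'' + E h' = c h` with
`c = 1 / (2 (q - 1))` and `E ξ = λ q h ^ (q - 1) - ξ / 2`. Since `h(0) = 0` and `h'(0) > 0`, both
`h` and `h'` stay positive: at a first zero of `h'` we would have `h'' = c h > 0`.

Write `a = 1 / (q - 1)` and let `θ < C₀`. Where `h ≤ θ ξ ^ a`, the coefficient `E` is at most `σ ξ`
for some `σ < 1 / 2`, so that `σ a < c`. The elasticity `r = ξ h' / h` solves the Riccati equation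
`r' = r (1 - r) / ξ + c ξ - E r`, so there its derivative exceeds `(c - σ b) ξ` as long as
`r ≤ b < 1`. If `σ b < c`, then `r` passes `b` within a distance `O(1 / ξ)`, and from there on `h`
grows at least like `ξ ^ b`. With `b` slightly above `a` this shows that `h` cannot stay below
`θ ξ ^ a` forever; with `b = a` it shows that when `h` drops below this curve at a point `s`, the
ratio `h / ξ ^ a` loses at most a factor that tends to `1` as `s → ∞`.
-/

section Crossing

variable {φ : ℝ → ℝ} {a b y : ℝ}

lemma exists_first_eq_of_continuousOn (hφ : ContinuousOn φ (Icc a b)) (hab : a ≤ b) (ha : φ a < y)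
    (hb : y ≤ φ b) : ∃ s ∈ Ioc a b, φ s = y ∧ ∀ x ∈ Ico a s, φ x < y := by
  have hne : (Icc a b ∩ φ ⁻¹' {y}).Nonempty := intermediate_value_Icc hab hφ ⟨ha.le, hb⟩
  have hcompact : IsCompact (Icc a b ∩ φ ⁻¹' {y}) :=
    isCompact_Icc.of_isClosed_subset
      (hφ.preimage_isClosed_of_isClosed isClosed_Icc isClosed_singleton) inter_subset_left
  obtain ⟨s, ⟨hs, hφs⟩, hmin⟩ := hcompact.exists_isLeast hne
  refine ⟨s, ⟨hs.1.lt_of_ne ?_, hs.2⟩, hφs, fun x hx => ?_⟩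
  · rintro rfl
    exact ha.ne hφs
  · by_contra! hyx
    have hxb : x ≤ b := hx.2.le.trans hs.2
    obtain ⟨z, hz, hφz⟩ :=
      intermediate_value_Icc hx.1 (hφ.mono (Icc_subset_Icc_right hxb)) ⟨ha.le, hyx⟩
    exact ((hmin ⟨⟨hz.1, hz.2.trans hxb⟩, hφz⟩).trans hz.2).not_gt hx.2

lemma exists_last_eq_of_continuousOn (hφ : ContinuousOn φ (Icc a b)) (hab : a ≤ b) (ha : y ≤ φ a)
    (hb : φ b < y) : ∃ s ∈ Ico a b, φ s = y ∧ ∀ x ∈ Ioc s b, φ x < y := by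
  have hcont : ContinuousOn (fun x => φ (-x)) (Icc (-b) (-a)) :=
    hφ.comp continuous_neg.continuousOn fun x hx => ⟨le_neg.2 hx.2, neg_le.1 hx.1⟩
  obtain ⟨s, hs, hφs, hlt⟩ :=
    exists_first_eq_of_continuousOn hcont (neg_le_neg hab) (by simpa using hb) (by simpa using ha)
  refine ⟨-s, ⟨le_neg.2 hs.2, neg_lt.1 hs.1⟩, hφs, fun x hx => ?_⟩
  simpa using hlt (-x) ⟨neg_le_neg hx.2, neg_lt.1 hx.1⟩

end Crossing

lemma hasDerivAt_derivWithin_of_mem_nhds {f : ℝ → ℝ} {s : Set ℝ} {x : ℝ}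
    (hf : DifferentiableOn ℝ f s) (hx : s ∈ 𝓝 x) : HasDerivAt f (derivWithin f s x) x :=
  ((hf x (mem_of_mem_nhds hx)).hasDerivWithinAt).hasDerivAt hx

lemma monotoneOn_of_hasDerivAt_nonneg {f f' : ℝ → ℝ} {s : Set ℝ} (hs : Convex ℝ s)
    (hf : ∀ x ∈ s, HasDerivAt f (f' x) x) (hf' : ∀ x ∈ s, 0 ≤ f' x) : MonotoneOn f s :=
  monotoneOn_of_hasDerivWithinAt_nonneg hs
    (fun x hx => (hf x hx).continuousAt.continuousWithinAt)
    (fun x hx => (hf x (interior_subset hx)).hasDerivWithinAt)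
    (fun x hx => hf' x (interior_subset hx))

lemma exists_lt_and_lt_of_hasDerivAt_pos {f : ℝ → ℝ} {a f' x : ℝ} (hf : HasDerivAt f f' x)
    (hf' : 0 < f') (hax : a < x) : ∃ y ∈ Ioo a x, f y < f x := by
  have hslope : ∀ᶠ y in 𝓝[<] x, 0 < slope f x y :=
    (hf.tendsto_slope.mono_left (nhdsWithin_mono x fun _ => ne_of_lt)).eventually_const_lt hf'
  obtain ⟨y, hy, hyx⟩ := (hslope.and (Ioo_mem_nhdsLT hax)).exists
  rw [slope_def_field] at hy
  refine ⟨y, hyx, not_le.1 fun hle => hy.not_ge ?_⟩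
  exact div_nonpos_of_nonneg_of_nonpos (sub_nonneg.2 hle) (sub_nonpos.2 hyx.2.le)

lemma tendsto_atTop_of_le_hasDerivAt {f f' : ℝ → ℝ} {a m : ℝ} (hm : 0 < m)
    (hf : ∀ x ∈ Ici a, HasDerivAt f (f' x) x) (hf' : ∀ x ∈ Ici a, m ≤ f' x) :
    Tendsto f atTop atTop := by
  have hmono : MonotoneOn (fun x => f x - m * x) (Ici a) :=
    monotoneOn_of_hasDerivAt_nonneg (convex_Ici a)
      (fun x hx => (hf x hx).sub ((hasDerivAt_id x).const_mul m))
      (fun x hx => by linarith [hf' x hx])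
  have hline : Tendsto (fun x => f a - m * a + m * x) atTop atTop :=
    tendsto_atTop_add_const_left _ _ (tendsto_id.const_mul_atTop hm)
  refine tendsto_atTop_mono' _ ?_ hline
  filter_upwards [eventually_ge_atTop a] with x hx
  linarith [hmono self_mem_Ici hx hx]

lemma mul_div_rpow_le_of_mul_le_mul_deriv {h w : ℝ → ℝ} {b x₀ x : ℝ} (hx₀ : 0 < x₀) (hx : x₀ ≤ x)
    (hh : ∀ y ∈ Icc x₀ x, HasDerivAt h (w y) y) (hb : ∀ y ∈ Icc x₀ x, b * h y ≤ y * w y) :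
    h x₀ * (x / x₀) ^ b ≤ h x := by
  have hpos : ∀ y ∈ Icc x₀ x, 0 < y := fun y hy => hx₀.trans_le hy.1
  have hmono : MonotoneOn (fun y => h y * y ^ (-b)) (Icc x₀ x) := by
    refine monotoneOn_of_hasDerivAt_nonneg (convex_Icc x₀ x)
      (fun y hy => (hh y hy).mul (hasDerivAt_rpow_const (Or.inl (hpos y hy).ne'))) fun y hy => ?_
    have hfactor : w y * y ^ (-b) + h y * (-b * y ^ (-b - 1))
        = y ^ (-b - 1) * (y * w y - b * h y) := by
      rw [rpow_sub_one (hpos y hy).ne']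
      field_simp [(hpos y hy).ne']
      ring
    rw [hfactor]
    exact mul_nonneg (rpow_nonneg (hpos y hy).le _) (sub_nonneg.2 (hb y hy))
  have hle : h x₀ * x₀ ^ (-b) ≤ h x * x ^ (-b) :=
    hmono (left_mem_Icc.2 hx) (right_mem_Icc.2 hx) hx
  have hx' : 0 < x := hx₀.trans_le hx
  rw [rpow_neg hx₀.le, rpow_neg hx'.le, ← div_eq_mul_inv, ← div_eq_mul_inv,
    le_div_iff₀ (rpow_pos_of_pos hx' b)] at hle
  calc h x₀ * (x / x₀) ^ b = h x₀ / x₀ ^ b * x ^ b := by rw [div_rpow hx'.le hx₀.le]; ring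
    _ ≤ h x := hle

/-- `h` is a positive increasing solution on `s`, with derivative `w`, of the linear equation
`h'' + E h' = c h`. The function `w` is an argument of its own so that it may be a `derivWithin`. -/
structure IsIncreasingSolutionOn (c : ℝ) (E h w : ℝ → ℝ) (s : Set ℝ) : Prop where
  pos : ∀ x ∈ s, 0 < h x
  deriv_pos : ∀ x ∈ s, 0 < w x
  hasDerivAt : ∀ x ∈ s, HasDerivAt h (w x) x
  hasDerivAt_deriv : ∀ x ∈ s, HasDerivAt w (c * h x - E x * w x) x

namespace IsIncreasingSolutionOn

variable {a b c x x₀ x₁ θ σ : ℝ} {E h w : ℝ → ℝ} {s t : Set ℝ}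

lemma mono (hs : IsIncreasingSolutionOn c E h w s) (hts : t ⊆ s) :
    IsIncreasingSolutionOn c E h w t :=
  ⟨fun x hx => hs.pos x (hts hx), fun x hx => hs.deriv_pos x (hts hx),
    fun x hx => hs.hasDerivAt x (hts hx), fun x hx => hs.hasDerivAt_deriv x (hts hx)⟩

lemma monotoneOn (hs : IsIncreasingSolutionOn c E h w s) (hconv : Convex ℝ s) : MonotoneOn h s :=
  monotoneOn_of_hasDerivAt_nonneg hconv hs.hasDerivAt fun x hx => (hs.deriv_pos x hx).le

lemma hasDerivAt_elasticity (hs : IsIncreasingSolutionOn c E h w s) (hx : x ∈ s) (hx₀ : x ≠ 0) :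
    HasDerivAt (fun y => y * w y / h y)
      (x * w x / h x * (1 - x * w x / h x) / x + c * x - E x * (x * w x / h x)) x := by
  have hne : h x ≠ 0 := (hs.pos x hx).ne'
  refine (((hasDerivAt_id x).mul (hs.hasDerivAt_deriv x hx)).div (hs.hasDerivAt x hx)
    hne).congr_deriv ?_
  simp only [id, Pi.mul_apply]
  field_simp
  ring

/-- Since the elasticity increases at rate at least `(c - σ b) x` below the level `b`, it can only
cross such a barrier upwards. -/
lemma le_elasticity (hs : IsIncreasingSolutionOn c E h w (Icc x₀ x₁)) (hx₀ : 0 < x₀) (hσ : 0 ≤ σ)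
    (hE : ∀ x ∈ Icc x₀ x₁, E x ≤ σ * x) (hb : b < 1) {B B' : ℝ → ℝ}
    (hB : ∀ x, HasDerivAt B (B' x) x) (hB' : ∀ x ∈ Icc x₀ x₁, B' x ≤ (c - σ * b) * x)
    (hBb : ∀ x ∈ Icc x₀ x₁, B x ≤ b) (hBx₀ : B x₀ ≤ x₀ * w x₀ / h x₀) :
    ∀ x ∈ Icc x₀ x₁, B x ≤ x * w x / h x := by
  have hpos : ∀ x ∈ Icc x₀ x₁, 0 < x := fun x hx => hx₀.trans_le hx.1
  have hderiv := fun x hx => hs.hasDerivAt_elasticity hx (hpos x hx).ne'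
  refine image_le_of_deriv_right_lt_deriv_boundary'
    (fun x _ => (hB x).continuousAt.continuousWithinAt) (fun x _ => (hB x).hasDerivWithinAt) hBx₀
    (fun x hx => (hderiv x hx).continuousAt.continuousWithinAt)
    (fun x hx => (hderiv x (Ico_subset_Icc_self hx)).hasDerivWithinAt) fun x hxI heq => ?_
  have hx := Ico_subset_Icc_self hxI
  have hr : 0 < x * w x / h x :=
    div_pos (mul_pos (hpos x hx) (hs.deriv_pos x hx)) (hs.pos x hx)
  have hrb : x * w x / h x ≤ b := heq ▸ hBb x hx
  set r := x * w x / h x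
  have hlogistic : 0 < r * (1 - r) / x :=
    div_pos (mul_pos hr (by linarith)) (hpos x hx)
  have hdrag : E x * r ≤ σ * b * x :=
    calc E x * r ≤ σ * x * r := mul_le_mul_of_nonneg_right (hE x hx) hr.le
      _ ≤ σ * x * b := mul_le_mul_of_nonneg_left hrb (mul_nonneg hσ (hpos x hx).le)
      _ = σ * b * x := by ring
  linarith [hB' x hx]

lemma le_elasticity_of_mul_eq (hs : IsIncreasingSolutionOn c E h w (Icc x₀ x)) (hx₀ : 0 < x₀)
    (hσ : 0 ≤ σ) (hE : ∀ y ∈ Icc x₀ x, E y ≤ σ * y) (hb : b < 1) (hbc : σ * b < c)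
    (hx₁ : x₁ ∈ Icc x₀ x) (hdist : (c - σ * b) * x₀ * (x₁ - x₀) = b) :
    ∀ y ∈ Icc x₁ x, b ≤ y * w y / h y := by
  have hκ : 0 < c - σ * b := sub_pos.2 hbc
  have hκx₀ : 0 < (c - σ * b) * x₀ := mul_pos hκ hx₀
  have hx₀mem : x₀ ∈ Icc x₀ x := left_mem_Icc.2 (hx₁.1.trans hx₁.2)
  have hsub₀ : Icc x₀ x₁ ⊆ Icc x₀ x := Icc_subset_Icc_right hx₁.2
  have hsub₁ : Icc x₁ x ⊆ Icc x₀ x := Icc_subset_Icc_left hx₁.1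
  have hreach : b ≤ x₁ * w x₁ / h x₁ := by
    rw [← hdist]
    refine (hs.mono hsub₀).le_elasticity (b := b)
      (B := fun y => (c - σ * b) * x₀ * (y - x₀)) (B' := fun _ => (c - σ * b) * x₀ * 1)
      hx₀ hσ (fun y hy => hE y (hsub₀ hy)) hb
      (fun y => ((hasDerivAt_id y).sub_const x₀).const_mul _) (fun y hy => ?_) (fun y hy => ?_) ?_
      x₁ (right_mem_Icc.2 hx₁.1)
    · rw [mul_one]
      exact mul_le_mul_of_nonneg_left hy.1 hκ.le
    · refine le_of_le_of_eq ?_ hdist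
      exact mul_le_mul_of_nonneg_left (sub_le_sub_right hy.2 x₀) hκx₀.le
    · rw [sub_self, mul_zero]
      exact (div_pos (mul_pos hx₀ (hs.deriv_pos x₀ hx₀mem)) (hs.pos x₀ hx₀mem)).le
  have hx₁pos : 0 < x₁ := hx₀.trans_le hx₁.1
  exact (hs.mono hsub₁).le_elasticity hx₁pos hσ (fun y hy => hE y (hsub₁ hy)) hb
    (fun y => hasDerivAt_const y b) (fun y hy => mul_nonneg hκ.le (hx₁pos.le.trans hy.1))
    (fun _ _ => le_rfl) hreach

/-- The elasticity reaches the level `b` within distance `b / ((c - σ b) x₀)`, over which it is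
enough that `h` does not decrease. -/
lemma mul_div_rpow_le (hs : IsIncreasingSolutionOn c E h w (Icc x₀ x)) (hx₀ : 0 < x₀)
    (hx : x₀ ≤ x) (hσ : 0 ≤ σ) (hE : ∀ y ∈ Icc x₀ x, E y ≤ σ * y) (hb₀ : 0 ≤ b) (hb : b < 1)
    (hbc : σ * b < c) :
    h x₀ * (x / (x₀ + b / ((c - σ * b) * x₀))) ^ b ≤ h x := by
  have hκx₀ : 0 < (c - σ * b) * x₀ := mul_pos (sub_pos.2 hbc) hx₀
  set x₁ := x₀ + b / ((c - σ * b) * x₀) with hx₁def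
  have hx₀₁ : x₀ ≤ x₁ := le_add_of_nonneg_right (div_nonneg hb₀ hκx₀.le)
  have hx₁pos : 0 < x₁ := hx₀.trans_le hx₀₁
  have hx₀mem : x₀ ∈ Icc x₀ x := left_mem_Icc.2 hx
  have hmono : MonotoneOn h (Icc x₀ x) := hs.monotoneOn (convex_Icc x₀ x)
  rcases le_total x x₁ with hxx₁ | hx₁x
  · have hpow : (x / x₁) ^ b ≤ 1 :=
      rpow_le_one (div_nonneg (hx₀.le.trans hx) hx₁pos.le) (div_le_one_of_le₀ hxx₁ hx₁pos.le) hb₀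
    exact (mul_le_of_le_one_right (hs.pos x₀ hx₀mem).le hpow).trans
      (hmono hx₀mem (right_mem_Icc.2 hx) hx)
  · have hx₁ : x₁ ∈ Icc x₀ x := ⟨hx₀₁, hx₁x⟩
    have hsub : Icc x₁ x ⊆ Icc x₀ x := Icc_subset_Icc_left hx₀₁
    have hdist : (c - σ * b) * x₀ * (x₁ - x₀) = b := by
      rw [hx₁def, add_sub_cancel_left, mul_div_cancel₀ _ hκx₀.ne']
    have helasticity := hs.le_elasticity_of_mul_eq hx₀ hσ hE hb hbc hx₁ hdist
    calc h x₀ * (x / x₁) ^ b ≤ h x₁ * (x / x₁) ^ b :=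
          mul_le_mul_of_nonneg_right (hmono hx₀mem hx₁ hx₀₁)
            (rpow_nonneg (div_nonneg (hx₀.le.trans hx) hx₁pos.le) b)
      _ ≤ h x := mul_div_rpow_le_of_mul_le_mul_deriv hx₁pos hx₁x
          (fun y hy => hs.hasDerivAt y (hsub hy))
          (fun y hy => (le_div_iff₀ (hs.pos y (hsub hy))).1 (helasticity y hy))

lemma tendsto_div_rpow_atTop (hs : IsIncreasingSolutionOn c E h w (Ici x₀)) (hx₀ : 0 < x₀)
    (hσ : 0 ≤ σ) (hE : ∀ x ∈ Ici x₀, E x ≤ σ * x) (ha₀ : 0 ≤ a) (ha : a < 1) (hac : σ * a < c) :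
    Tendsto (fun x => h x / x ^ a) atTop atTop := by
  obtain ⟨b, hab, hb, hbc⟩ : ∃ b, a < b ∧ b < 1 ∧ σ * b < c := by
    have hlt : ∀ᶠ b in 𝓝[>] a, b < 1 ∧ σ * b < c :=
      nhdsWithin_le_nhds ((eventually_lt_nhds ha).and
        ((continuous_const_mul σ).continuousAt.eventually_lt_const hac))
    exact (eventually_mem_nhdsWithin.and hlt).exists
  set x₁ := x₀ + b / ((c - σ * b) * x₀)
  have hb₀ : 0 < b := ha₀.trans_lt hab
  have hx₁ : 0 < x₁ := add_pos hx₀ (div_pos hb₀ (mul_pos (sub_pos.2 hbc) hx₀))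
  have hlower : Tendsto (fun x => h x₀ / x₁ ^ b * x ^ (b - a)) atTop atTop :=
    (tendsto_rpow_atTop (sub_pos.2 hab)).const_mul_atTop
      (div_pos (hs.pos x₀ self_mem_Ici) (rpow_pos_of_pos hx₁ b))
  refine tendsto_atTop_mono' _ ?_ hlower
  filter_upwards [eventually_ge_atTop x₀] with x hx
  have hxpos : 0 < x := hx₀.trans_le hx
  have hgrowth : h x₀ * (x / x₁) ^ b ≤ h x :=
    (hs.mono Icc_subset_Ici_self).mul_div_rpow_le hx₀ hx hσ (fun y hy => hE y hy.1) hb₀.le hb hbc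
  calc h x₀ / x₁ ^ b * x ^ (b - a) = h x₀ * (x / x₁) ^ b / x ^ a := by
        rw [div_rpow hxpos.le hx₁.le, rpow_sub hxpos]
        ring
    _ ≤ h x / x ^ a := div_le_div_of_nonneg_right hgrowth (rpow_nonneg hxpos.le a)

lemma exists_mul_rpow_lt (hs : IsIncreasingSolutionOn c E h w (Ici x₀)) (hx₀ : 0 < x₀)
    (hσ : 0 ≤ σ) (ha₀ : 0 ≤ a) (ha : a < 1) (hac : σ * a < c)
    (hE : ∀ x ∈ Ici x₀, h x ≤ θ * x ^ a → E x ≤ σ * x) : ∃ x ≥ x₀, θ * x ^ a < h x := by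
  by_contra! hle
  have htop := hs.tendsto_div_rpow_atTop hx₀ hσ (fun x hx => hE x hx (hle x hx)) ha₀ ha hac
  obtain ⟨x, hθ, hx⟩ := ((htop.eventually_gt_atTop θ).and (eventually_ge_atTop x₀)).exists
  exact (hle x hx).not_gt ((lt_div_iff₀ (rpow_pos_of_pos (hx₀.trans_le hx) a)).1 hθ)

end IsIncreasingSolutionOn

lemma tendsto_div_add_div_mul_atTop (a κ : ℝ) :
    Tendsto (fun x : ℝ => x / (x + a / (κ * x))) atTop (𝓝 1) := by
  have hinv : Tendsto (fun x : ℝ => (1 + a / κ / x ^ 2)⁻¹) atTop (𝓝 (1 + 0)⁻¹) :=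
    ((tendsto_const_nhds.div_atTop (tendsto_pow_atTop two_ne_zero)).const_add 1).inv₀ (by norm_num)
  rw [add_zero, inv_one] at hinv
  refine hinv.congr' ?_
  filter_upwards [eventually_gt_atTop 0] with x hx
  have hsum : x + a / (κ * x) = x * (1 + a / κ / x ^ 2) := by
    simp only [mul_one_add, div_eq_mul_inv, mul_inv]
    field_simp
  rw [hsum, div_mul_cancel_left₀ hx.ne']

namespace IsIncreasingSolutionOn

variable {a c x θ σ η : ℝ} {E h w : ℝ → ℝ}

/-- Follow `h` from its last crossing of the curve `θ x ^ a`. -/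
lemma eventually_mul_rpow_le (hs : IsIncreasingSolutionOn c E h w (Ioi 0)) (hσ : 0 ≤ σ)
    (ha₀ : 0 ≤ a) (ha : a < 1) (hac : σ * a < c)
    (hE : ∀ x ∈ Ioi 0, h x ≤ θ * x ^ a → E x ≤ σ * x) (hη : η < θ) :
    ∀ᶠ x in atTop, η * x ^ a ≤ h x := by
  have hloss : Tendsto (fun s => θ * (s / (s + a / ((c - σ * a) * s))) ^ a) atTop (𝓝 θ) := by
    have hlim := (tendsto_div_add_div_mul_atTop a (c - σ * a)).rpow_const (p := a)
      (Or.inl one_ne_zero)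
    simpa using hlim.const_mul θ
  obtain ⟨X, hX⟩ := eventually_atTop.1
    ((hloss.eventually_const_lt hη).and (eventually_gt_atTop (0 : ℝ)))
  have hXpos : 0 < X := (hX X le_rfl).2
  have hXsub : Ici X ⊆ Ioi 0 := Ici_subset_Ioi.2 hXpos
  obtain ⟨x₁, hx₁, hθx₁⟩ := (hs.mono hXsub).exists_mul_rpow_lt hXpos hσ ha₀ ha hac
    fun x hx => hE x (hXsub hx)
  filter_upwards [eventually_ge_atTop x₁] with x hx
  have hxpos : 0 < x := hXsub (hx₁.trans hx)
  rcases le_or_gt (θ * x ^ a) (h x) with hθx | hθx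
  · exact (mul_le_mul_of_nonneg_right hη.le (rpow_nonneg hxpos.le a)).trans hθx
  have hcont : ContinuousOn (fun y => h y - θ * y ^ a) (Icc x₁ x) := fun y hy =>
    ((hs.hasDerivAt y (hXsub (hx₁.trans hy.1))).continuousAt.sub
      ((continuous_rpow_const ha₀).continuousAt.const_mul θ)).continuousWithinAt
  obtain ⟨s, hsx, hcross, hbelow⟩ :=
    exists_last_eq_of_continuousOn hcont hx (sub_pos.2 hθx₁).le (sub_neg.2 hθx)
  obtain ⟨hηs, hspos⟩ := hX s (hx₁.trans hsx.1)
  have hle : ∀ y ∈ Icc s x, h y ≤ θ * y ^ a := fun y hy => by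
    rcases hy.1.eq_or_lt with rfl | hsy
    · exact (sub_eq_zero.1 hcross).le
    · exact (sub_neg.1 (hbelow y ⟨hsy, hy.2⟩)).le
  have hsub : Icc s x ⊆ Ioi 0 := fun y hy => hspos.trans_le hy.1
  have hgrowth := (hs.mono hsub).mul_div_rpow_le hspos hsx.2.le hσ
    (fun y hy => hE y (hsub hy) (hle y hy)) ha₀ ha hac
  set s₁ := s + a / ((c - σ * a) * s)
  have hs₁ : 0 < s₁ :=
    add_pos_of_pos_of_nonneg hspos (div_nonneg ha₀ (mul_pos (sub_pos.2 hac) hspos).le)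
  calc η * x ^ a ≤ θ * (s / s₁) ^ a * x ^ a :=
        mul_le_mul_of_nonneg_right hηs.le (rpow_nonneg hxpos.le a)
    _ = h s * (x / s₁) ^ a := by
        rw [sub_eq_zero.1 hcross, div_rpow hspos.le hs₁.le, div_rpow hxpos.le hs₁.le]
        ring
    _ ≤ h x := hgrowth

end IsIncreasingSolutionOn

lemma le_mul_rpow_inv_iff {x y θ p : ℝ} (hy : 0 ≤ y) (hθ : 0 ≤ θ) (hx : 0 ≤ x) (hp : 0 < p) :
    y ≤ θ * x ^ p⁻¹ ↔ y ^ p ≤ θ ^ p * x := by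
  rw [← rpow_le_rpow_iff hy (mul_nonneg hθ (rpow_nonneg hx _)) hp,
    mul_rpow hθ (rpow_nonneg hx _), rpow_inv_rpow hx hp.ne']

namespace SolvesKPZProfile

/-- The derivative of a function on the half-line `[0, ∞)`, one-sided at `0`. -/
local notation:max "∂₊" f:max => derivWithin f (Ici (0 : ℝ))

variable {q lam x θ : ℝ} {f : ℝ → ℝ}

lemma contDiffOn_derivWithin (hf : SolvesKPZProfile q lam (Ici 0) f) :
    ContDiffOn ℝ 1 ∂₊f (Ici 0) :=
  hf.1.derivWithin (uniqueDiffOn_Ici 0) (by norm_num)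

lemma hasDerivAt (hf : SolvesKPZProfile q lam (Ici 0) f) (hx : 0 < x) :
    HasDerivAt f (∂₊f x) x :=
  hasDerivAt_derivWithin_of_mem_nhds (hf.1.differentiableOn (by norm_num)) (Ici_mem_nhds hx)

lemma hasDerivAt_derivWithin (hf : SolvesKPZProfile q lam (Ici 0) f) (hx : 0 < x) :
    HasDerivAt ∂₊f (∂₊(∂₊f) x) x :=
  hasDerivAt_derivWithin_of_mem_nhds (hf.contDiffOn_derivWithin.differentiableOn (by norm_num))
    (Ici_mem_nhds hx)

lemma continuousOn_derivWithin_derivWithin (hf : SolvesKPZProfile q lam (Ici 0) f) :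
    ContinuousOn ∂₊(∂₊f) (Ici 0) :=
  hf.contDiffOn_derivWithin.continuousOn_derivWithin (uniqueDiffOn_Ici 0) le_rfl

lemma derivWithin_derivWithin_eq (hf : SolvesKPZProfile q lam (Ici 0) f) (hx : 0 ≤ x) :
    ∂₊(∂₊f) x = -lam * |∂₊f x| ^ q + 1 / 2 * x * ∂₊f x - (q - 2) / (2 * (q - 1)) * f x := by
  linarith [hf.2 x hx]

lemma derivWithin_derivWithin_zero_pos (hf : SolvesKPZProfile q lam (Ici 0) f) (hq : 2 < q)
    (hf₀ : f 0 < 0) (hf'₀ : ∂₊f 0 = 0) : 0 < ∂₊(∂₊f) 0 := by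
  rw [hf.derivWithin_derivWithin_eq le_rfl, hf'₀, abs_zero, zero_rpow (by linarith)]
  have hcoeff : 0 < (q - 2) / (2 * (q - 1)) := div_pos (by linarith) (by linarith)
  linarith [mul_neg_of_pos_of_neg hcoeff hf₀]

lemma hasDerivAt_derivWithin_derivWithin (hf : SolvesKPZProfile q lam (Ici 0) f) (hq : q ≠ 1)
    (hx : 0 < x) (hf' : 0 < ∂₊f x) :
    HasDerivAt ∂₊(∂₊f) (1 / (2 * (q - 1)) * ∂₊f x
      - (lam * q * ∂₊f x ^ (q - 1) - x / 2) * ∂₊(∂₊f) x) x := by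
  have hslope := hf.hasDerivAt_derivWithin hx
  have hode : ∂₊(∂₊f) =ᶠ[𝓝 x] fun y =>
      -lam * ∂₊f y ^ q + 1 / 2 * y * ∂₊f y - (q - 2) / (2 * (q - 1)) * f y := by
    filter_upwards [hslope.continuousAt.eventually_const_lt hf', Ioi_mem_nhds hx] with y hy hy₀
    rw [hf.derivWithin_derivWithin_eq (mem_Ioi.1 hy₀).le, abs_of_pos hy]
  have hcoeff : 1 / (2 * (q - 1)) = 1 / 2 - (q - 2) / (2 * (q - 1)) := by
    have : q - 1 ≠ 0 := sub_ne_zero.2 hq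
    field_simp
    ring
  refine ((((hslope.rpow_const (Or.inl hf'.ne')).const_mul (-lam)).add
    (((hasDerivAt_id x).const_mul (1 / 2)).mul hslope)).sub
    ((hf.hasDerivAt hx).const_mul _)).congr_deriv ?_ |>.congr_of_eventuallyEq hode
  rw [hcoeff]
  simp only [id]
  ring

lemma derivWithin_pos_of_forall_Ioo (hf : SolvesKPZProfile q lam (Ici 0) f) (hf'₀ : 0 ≤ ∂₊f 0)
    (hx : 0 < x) (hf'' : ∀ y ∈ Ioo 0 x, 0 < ∂₊(∂₊f) y) : 0 < ∂₊f x := by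
  have hmono : StrictMonoOn ∂₊f (Icc 0 x) := by
    refine strictMonoOn_of_hasDerivWithinAt_pos (f' := ∂₊(∂₊f)) (convex_Icc 0 x)
      (hf.contDiffOn_derivWithin.continuousOn.mono Icc_subset_Ici_self) (fun y hy => ?_)
      (fun y hy => hf'' y (interior_Icc.subset hy))
    exact (hf.hasDerivAt_derivWithin (interior_Icc.subset hy).1).hasDerivWithinAt
  exact hf'₀.trans_lt (hmono (left_mem_Icc.2 hx.le) (right_mem_Icc.2 hx.le) hx)

lemma derivWithin_derivWithin_pos (hf : SolvesKPZProfile q lam (Ici 0) f) (hq : 1 < q)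
    (hf'₀ : 0 ≤ ∂₊f 0) (hf''₀ : 0 < ∂₊(∂₊f) 0) (hx : 0 ≤ x) : 0 < ∂₊(∂₊f) x := by
  by_contra! hneg
  have hcont : ContinuousOn (fun y => -∂₊(∂₊f) y) (Icc 0 x) :=
    (hf.continuousOn_derivWithin_derivWithin.mono Icc_subset_Ici_self).neg
  obtain ⟨s, ⟨hs₀, -⟩, hzero, hbefore⟩ :=
    exists_first_eq_of_continuousOn hcont hx (neg_lt_zero.2 hf''₀) (neg_nonneg.2 hneg)
  have hpos : ∀ y ∈ Ioo 0 s, 0 < ∂₊(∂₊f) y := fun y hy =>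
    neg_lt_zero.1 (hbefore y (Ioo_subset_Ico_self hy))
  have hslope : 0 < ∂₊f s := hf.derivWithin_pos_of_forall_Ioo hf'₀ hs₀ hpos
  have hderiv := hf.hasDerivAt_derivWithin_derivWithin hq.ne' hs₀ hslope
  rw [neg_eq_zero.1 hzero, mul_zero, sub_zero] at hderiv
  have hcoeff : 0 < 1 / (2 * (q - 1)) := one_div_pos.2 (by linarith)
  obtain ⟨y, hy, hlt⟩ :=
    exists_lt_and_lt_of_hasDerivAt_pos hderiv (mul_pos hcoeff hslope) hs₀
  exact (hpos y hy).not_gt (hlt.trans_eq (neg_eq_zero.1 hzero))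

lemma isIncreasingSolutionOn (hf : SolvesKPZProfile q lam (Ici 0) f) (hq : 1 < q)
    (hf'₀ : 0 ≤ ∂₊f 0) (hf''₀ : 0 < ∂₊(∂₊f) 0) :
    IsIncreasingSolutionOn (1 / (2 * (q - 1))) (fun x => lam * q * ∂₊f x ^ (q - 1) - x / 2)
      ∂₊f ∂₊(∂₊f) (Ioi 0) := by
  have hf'' : ∀ x ≥ 0, 0 < ∂₊(∂₊f) x := fun x => hf.derivWithin_derivWithin_pos hq hf'₀ hf''₀
  have hf' : ∀ x > 0, 0 < ∂₊f x := fun x hx =>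
    hf.derivWithin_pos_of_forall_Ioo hf'₀ hx fun y hy => hf'' y hy.1.le
  exact ⟨hf', fun x hx => hf'' x (le_of_lt hx), fun x => hf.hasDerivAt_derivWithin,
    fun x hx => hf.hasDerivAt_derivWithin_derivWithin hq.ne' hx (hf' x hx)⟩

lemma tendsto_atTop (hf : SolvesKPZProfile q lam (Ici 0) f) (hq : 1 < q) (hf'₀ : 0 ≤ ∂₊f 0)
    (hf''₀ : 0 < ∂₊(∂₊f) 0) : Tendsto f atTop atTop := by
  have hsol := hf.isIncreasingSolutionOn hq hf'₀ hf''₀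
  have hpos : Ici (1 : ℝ) ⊆ Ioi 0 := Ici_subset_Ioi.2 one_pos
  exact tendsto_atTop_of_le_hasDerivAt (hsol.pos 1 (mem_Ioi.2 one_pos))
    (fun x hx => hf.hasDerivAt (hpos hx))
    (fun x hx => hsol.monotoneOn (convex_Ioi 0) (mem_Ioi.2 one_pos) (hpos hx) hx)

/-- Once `f ≥ 0`, the equation and `f'' ≥ 0` give `λ f' ^ q ≤ x f' / 2`. -/
lemma eventually_derivWithin_le (hf : SolvesKPZProfile q lam (Ici 0) f) (hq : 2 ≤ q)
    (hlam : 0 < lam) (hf'₀ : 0 ≤ ∂₊f 0) (hf''₀ : 0 < ∂₊(∂₊f) 0) :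
    ∀ᶠ x in atTop, ∂₊f x ≤ (1 / (2 * lam)) ^ (q - 1)⁻¹ * x ^ (q - 1)⁻¹ := by
  have hq₁ : 1 < q := by linarith
  have hsol := hf.isIncreasingSolutionOn hq₁ hf'₀ hf''₀
  filter_upwards [(hf.tendsto_atTop hq₁ hf'₀ hf''₀).eventually_ge_atTop 0,
    eventually_gt_atTop 0] with x hfx hx
  have hf' : 0 < ∂₊f x := hsol.pos x hx
  have hpow : ∂₊f x ^ q = ∂₊f x ^ (q - 1) * ∂₊f x := by
    rw [← rpow_add_one hf'.ne', sub_add_cancel]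
  have hode := hf.derivWithin_derivWithin_eq hx.le
  rw [abs_of_pos hf', hpow] at hode
  have hterm : 0 ≤ (q - 2) / (2 * (q - 1)) * f x :=
    mul_nonneg (div_nonneg (by linarith) (by linarith)) hfx
  have hbound : lam * ∂₊f x ^ (q - 1) ≤ 1 / 2 * x :=
    le_of_mul_le_mul_right (by linarith [hsol.deriv_pos x hx]) hf'
  have hcoeff : 0 ≤ 1 / (2 * lam) := by positivity
  rw [le_mul_rpow_inv_iff hf'.le (rpow_nonneg hcoeff _) hx.le (by linarith),
    rpow_inv_rpow hcoeff (by linarith), div_mul_eq_mul_div, le_div_iff₀ (by positivity)]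
  linarith

lemma eventually_mul_rpow_le_derivWithin (hf : SolvesKPZProfile q lam (Ici 0) f) (hq : 2 < q)
    (hlam : 0 < lam) (hf'₀ : 0 ≤ ∂₊f 0) (hf''₀ : 0 < ∂₊(∂₊f) 0)
    (hθ : θ < (1 / (lam * q)) ^ (q - 1)⁻¹) :
    ∀ᶠ x in atTop, θ * x ^ (q - 1)⁻¹ ≤ ∂₊f x := by
  have hq₁ : 0 < q - 1 := by linarith
  have hlamq : 0 < lam * q := mul_pos hlam (by linarith)
  have hsol := hf.isIncreasingSolutionOn (by linarith) hf'₀ hf''₀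
  obtain ⟨θ', hθθ', hθ'⟩ := exists_between (max_lt hθ (rpow_pos_of_pos (one_div_pos.2 hlamq) _))
  have hθ'₀ : 0 < θ' := (le_max_right _ _).trans_lt hθθ'
  have hdamp : lam * q * θ' ^ (q - 1) < 1 := by
    rwa [lt_rpow_inv_iff_of_pos hθ'₀.le (one_div_pos.2 hlamq).le hq₁, lt_div_iff₀' hlamq] at hθ'
  set σ := max (lam * q * θ' ^ (q - 1) - 1 / 2) 0
  have hσ : σ < 1 / 2 := max_lt (by linarith) (by norm_num)
  refine hsol.eventually_mul_rpow_le (σ := σ) (le_max_right _ _) (inv_nonneg.2 hq₁.le)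
    (inv_lt_one_of_one_lt₀ (by linarith)) ?_ (fun x hx hle => ?_)
    ((le_max_left _ _).trans_lt hθθ')
  · calc σ * (q - 1)⁻¹ < 1 / 2 * (q - 1)⁻¹ := mul_lt_mul_of_pos_right hσ (inv_pos.2 hq₁)
      _ = 1 / (2 * (q - 1)) := by rw [one_div, one_div, mul_inv]
  · rw [le_mul_rpow_inv_iff (hsol.pos x hx).le hθ'₀.le (le_of_lt hx) hq₁] at hle
    calc lam * q * ∂₊f x ^ (q - 1) - x / 2 ≤ lam * q * (θ' ^ (q - 1) * x) - x / 2 :=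
          sub_le_sub_right (mul_le_mul_of_nonneg_left hle hlamq.le) _
      _ = (lam * q * θ' ^ (q - 1) - 1 / 2) * x := by ring
      _ ≤ σ * x := mul_le_mul_of_nonneg_right (le_max_left _ _) (le_of_lt hx)

end SolvesKPZProfile

lemma kpzG_eq_div (q : ℝ) (f : ℝ → ℝ) (t : ℝ) :
    kpzG q f t = derivWithin f (Ici 0) (exp t) / exp t ^ (q - 1)⁻¹ := by
  rw [kpzG, ← exp_mul, neg_div, exp_neg, inv_mul_eq_div, div_eq_mul_inv t]

theorem kpz_g_liminf_general (q lam : ℝ) (hq : 2 < q) (hlam : 0 < lam) (f : ℝ → ℝ)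
    (hsol : SolvesKPZProfile q lam (Ici 0) f) (hf'0 : 0 ≤ derivWithin f (Ici 0) 0)
    (hf''0 : 0 < derivWithin (derivWithin f (Ici 0)) (Ici 0) 0) :
    (1 / (lam * q)) ^ (1 / (q - 1)) ≤ liminf (kpzG q f) atTop := by
  have hpow (t : ℝ) : 0 < exp t ^ (q - 1)⁻¹ := rpow_pos_of_pos (exp_pos t) _
  have hcobdd : IsCoboundedUnder (· ≥ ·) atTop (kpzG q f) := by
    refine IsBoundedUnder.isCoboundedUnder_ge ⟨(1 / (2 * lam)) ^ (q - 1)⁻¹, eventually_map.2 ?_⟩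
    filter_upwards [tendsto_exp_atTop.eventually
      (hsol.eventually_derivWithin_le hq.le hlam hf'0 hf''0)] with t ht
    rwa [kpzG_eq_div, div_le_iff₀ (hpow t)]
  rw [one_div (q - 1)]
  refine le_of_forall_lt_imp_le_of_dense fun θ hθ => le_liminf_of_le hcobdd ?_
  filter_upwards [tendsto_exp_atTop.eventually
    (hsol.eventually_mul_rpow_le_derivWithin hq hlam hf'0 hf''0 hθ)] with t ht
  rwa [kpzG_eq_div, le_div_iff₀ (hpow t)]

theorem kpz_g_liminf (q lam : ℝ) (hq : 2 < q) (hlam : 0 < lam)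
    (f : ℝ → ℝ)
    (hsol : SolvesKPZProfile q lam (Set.Ici 0) f)
    (hf0 : f 0 = -1)
    (hf'0 : derivWithin f (Set.Ici 0) 0 = 0) :
    (1 / (lam * q)) ^ (1 / (q - 1)) ≤ Filter.liminf (kpzG q f) atTop :=
  kpz_g_liminf_general q lam hq hlam f hsol hf'0.ge
    (hsol.derivWithin_derivWithin_zero_pos hq (hf0.trans_lt (by norm_num)) hf'0)
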